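/- Let b : ℝ × ℝ^d → ℝ^d be smooth, Lipschitz in space uniformly in time, with flow X(t,x), and let J(t,x) := det(∇ₓX(t,x)). If there is C > 0 with 1/C ≤ J(t,x) ≤ C for all (t,x), then the function ρ(t,x) defined by ρ(t, X(t,x)) := 1/J(t,x) satisfies 1/C ≤ ρ ≤ C and solves the continuity equation ∂ₜρ + div(bρ) = 0; in particular b is nearly incompressible. -/

import Mathlib

/-!
Picard iteration contracts on the space of curves whose growth is controlled by the hyperbolic
cosine of a primitive of the Lipschitz rate, so a globally Lipschitz field has integral curves on
the whole line through every point. Integral curves through `(t, y)` make the flow map `X t`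
surjective, and solutions of the variational equation `W' = (∇b)(t, X) W` are, by Grönwall, the
spatial derivatives of the flow. Taking determinants gives Liouville's formula
`J' = (div b)(t, X) J`; differentiating `ρ (t, X t x) = 1 / J` along a trajectory then yields
`∂ₜρ + b · ∇ρ = -(div b) ρ` there, and by surjectivity trajectories pass through every point.
-/

open Set Filter MeasureTheory Function Topology
open scoped NNReal BoundedContinuousFunction

section CoshWeight

/-- The hyperbolic cosine of the primitive of `a` vanishing at `t₀`: a weight that plays the role of
`exp |∫ a|` in Picard iteration, while being smooth across `t₀`. -/
noncomputable def coshWeight (a : ℝ → ℝ) (t₀ t : ℝ) : ℝ :=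
  Real.cosh (∫ s in t₀..t, a s)

variable {a : ℝ → ℝ}

theorem one_le_coshWeight (a : ℝ → ℝ) (t₀ t : ℝ) : 1 ≤ coshWeight a t₀ t :=
  Real.one_le_cosh _

theorem coshWeight_pos (a : ℝ → ℝ) (t₀ t : ℝ) : 0 < coshWeight a t₀ t :=
  Real.cosh_pos _

theorem continuous_coshWeight (ha : Continuous a) (t₀ : ℝ) : Continuous (coshWeight a t₀) :=
  Real.continuous_cosh.comp
    (intervalIntegral.continuous_primitive (fun _ _ => ha.intervalIntegrable _ _) t₀)

theorem integral_mul_coshWeight (ha : Continuous a) (t₀ t : ℝ) :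
    ∫ s in t₀..t, a s * coshWeight a t₀ s = Real.sinh (∫ s in t₀..t, a s) := by
  have hderiv (s : ℝ) : HasDerivAt (fun s => Real.sinh (∫ r in t₀..s, a r))
      (a s * coshWeight a t₀ s) s := by
    simpa only [coshWeight, mul_comm] using (ha.integral_hasStrictDerivAt t₀ s).hasDerivAt.sinh
  rw [intervalIntegral.integral_eq_sub_of_hasDerivAt (fun s _ => hderiv s)
    ((ha.mul (continuous_coshWeight ha t₀)).intervalIntegrable _ _)]
  simp

theorem norm_inv_coshWeight_smul_integral_le {E : Type*} [NormedAddCommGroup E] [NormedSpace ℝ E]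
    (ha : Continuous a) {t₀ : ℝ} {h : ℝ → E} {c : ℝ} (hc : 0 ≤ c)
    (hh : ∀ s, ‖h s‖ ≤ c * (a s * coshWeight a t₀ s)) (t : ℝ) :
    ‖(coshWeight a t₀ t)⁻¹ • ∫ s in t₀..t, h s‖ ≤ c := by
  have hpos := coshWeight_pos a t₀ t
  rw [norm_smul, norm_inv, Real.norm_of_nonneg hpos.le, inv_mul_le_iff₀ hpos, mul_comm]
  calc
    ‖∫ s in t₀..t, h s‖ ≤ |∫ s in t₀..t, c * (a s * coshWeight a t₀ s)| :=
      intervalIntegral.norm_integral_le_abs_of_norm_le (.of_forall hh)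
        (((ha.mul (continuous_coshWeight ha t₀)).const_mul c).intervalIntegrable _ _)
    _ = c * |Real.sinh (∫ s in t₀..t, a s)| := by
      rw [intervalIntegral.integral_const_mul, integral_mul_coshWeight ha, abs_mul,
        abs_of_nonneg hc]
    _ ≤ c * coshWeight a t₀ t := by
      gcongr
      rw [coshWeight, Real.abs_sinh, ← Real.cosh_abs]
      exact (Real.sinh_lt_cosh _).le

end CoshWeight

section GlobalExistence

/-- Twice the Lipschitz constant bounds the growth of `v` around `x₀` with a factor to spare, the
other summand bounds `v` at `x₀`: the rate of the weight for which Picard iteration contracts. -/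
def picardRate {E : Type*} [NormedAddCommGroup E] (v : ℝ → E → E) (L : ℝ≥0) (x₀ : E) (t : ℝ) : ℝ :=
  2 * L + ‖v t x₀‖

theorem continuous_picardRate {E : Type*} [NormedAddCommGroup E] {v : ℝ → E → E}
    (hv : Continuous (uncurry v)) (L : ℝ≥0) (x₀ : E) : Continuous (picardRate v L x₀) := by
  unfold picardRate
  fun_prop

variable {E : Type*} [NormedAddCommGroup E] [NormedSpace ℝ E]

/-- The curve whose deviation from `x₀`, divided by the weight, is the bounded function `w`. -/
noncomputable def weightedCurve (a : ℝ → ℝ) (t₀ : ℝ) (x₀ : E) (w : ℝ →ᵇ E) (t : ℝ) : E :=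
  x₀ + coshWeight a t₀ t • w t

theorem continuous_weightedCurve {a : ℝ → ℝ} (ha : Continuous a) (t₀ : ℝ) (x₀ : E) (w : ℝ →ᵇ E) :
    Continuous (weightedCurve a t₀ x₀ w) :=
  continuous_const.add ((continuous_coshWeight ha t₀).smul w.continuous)

variable {v : ℝ → E → E} {L : ℝ≥0}

theorem norm_apply_weightedCurve_sub_le (hL : ∀ t, LipschitzWith L (v t)) (a : ℝ → ℝ) (t₀ : ℝ)
    (x₀ : E) (w w' : ℝ →ᵇ E) (t : ℝ) :
    ‖v t (weightedCurve a t₀ x₀ w t) - v t (weightedCurve a t₀ x₀ w' t)‖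
      ≤ L * (coshWeight a t₀ t * dist w w') := by
  have hpos := coshWeight_pos a t₀ t
  refine ((hL t).norm_sub_le _ _).trans ?_
  rw [weightedCurve, weightedCurve, add_sub_add_left_eq_sub, ← smul_sub, norm_smul,
    Real.norm_of_nonneg hpos.le, ← dist_eq_norm]
  gcongr
  exact w.dist_coe_le_dist t

theorem norm_apply_weightedCurve_le (hL : ∀ t, LipschitzWith L (v t)) (t₀ : ℝ) (x₀ : E) (w : ℝ →ᵇ E)
    (t : ℝ) :
    ‖v t (weightedCurve (picardRate v L x₀) t₀ x₀ w t)‖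
      ≤ (1 + ‖w‖) * (picardRate v L x₀ t * coshWeight (picardRate v L x₀) t₀ t) := by
  set p := coshWeight (picardRate v L x₀) t₀ t
  have hlip : ‖v t (weightedCurve (picardRate v L x₀) t₀ x₀ w t) - v t x₀‖ ≤ L * (p * ‖w‖) := by
    simpa [weightedCurve] using norm_apply_weightedCurve_sub_le hL (picardRate v L x₀) t₀ x₀ w 0 t
  have htri := norm_sub_norm_le (v t (weightedCurve (picardRate v L x₀) t₀ x₀ w t)) (v t x₀)
  have hone : 0 ≤ ‖v t x₀‖ * (p - 1) :=
    mul_nonneg (norm_nonneg _) (sub_nonneg.2 (one_le_coshWeight _ _ _))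
  have hrest : 0 ≤ (2 + ‖w‖) * (L * p) + ‖w‖ * (‖v t x₀‖ * p) := by
    have hpos : 0 < p := coshWeight_pos _ _ _
    positivity
  have hrate : picardRate v L x₀ t = 2 * L + ‖v t x₀‖ := rfl
  rw [hrate]
  linear_combination hlip + htri + hone + hrest

/-- The Picard operator `γ ↦ x₀ + ∫ v s (γ s)` read through `weightedCurve`, so that it acts on the
bounded continuous functions on the whole line. -/
noncomputable def weightedPicard (hv : Continuous (uncurry v)) (hL : ∀ t, LipschitzWith L (v t))
    (t₀ : ℝ) (x₀ : E) (w : ℝ →ᵇ E) : ℝ →ᵇ E :=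
  have ha := continuous_picardRate hv L x₀
  BoundedContinuousFunction.ofNormedAddCommGroup
    (fun t => (coshWeight (picardRate v L x₀) t₀ t)⁻¹ •
      ∫ s in t₀..t, v s (weightedCurve (picardRate v L x₀) t₀ x₀ w s))
    (((continuous_coshWeight ha t₀).inv₀ fun t => (coshWeight_pos _ t₀ t).ne').smul
      (intervalIntegral.continuous_primitive (fun _ _ => (hv.comp (continuous_id.prodMk
        (continuous_weightedCurve ha t₀ x₀ w))).intervalIntegrable _ _) t₀))
    (1 + ‖w‖) (norm_inv_coshWeight_smul_integral_le ha (by positivity)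
      (norm_apply_weightedCurve_le hL t₀ x₀ w))

theorem weightedPicard_apply (hv : Continuous (uncurry v)) (hL : ∀ t, LipschitzWith L (v t))
    (t₀ : ℝ) (x₀ : E) (w : ℝ →ᵇ E) (t : ℝ) :
    weightedPicard hv hL t₀ x₀ w t = (coshWeight (picardRate v L x₀) t₀ t)⁻¹ •
      ∫ s in t₀..t, v s (weightedCurve (picardRate v L x₀) t₀ x₀ w s) :=
  rfl

theorem contractingWith_weightedPicard (hv : Continuous (uncurry v))
    (hL : ∀ t, LipschitzWith L (v t)) (t₀ : ℝ) (x₀ : E) :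
    ContractingWith (1 / 2) (weightedPicard hv hL t₀ x₀) := by
  have ha := continuous_picardRate hv L x₀
  have hint (w : ℝ →ᵇ E) (t : ℝ) : IntervalIntegrable
      (fun s => v s (weightedCurve (picardRate v L x₀) t₀ x₀ w s)) volume t₀ t :=
    (hv.comp (continuous_id.prodMk (continuous_weightedCurve ha t₀ x₀ w))).intervalIntegrable _ _
  refine ⟨by simpa using NNReal.half_lt_self one_ne_zero,
    LipschitzWith.of_dist_le_mul fun w w' =>
      (BoundedContinuousFunction.dist_le (by positivity)).2 fun t => ?_⟩
  rw [weightedPicard_apply, weightedPicard_apply, dist_eq_norm, ← smul_sub,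
    ← intervalIntegral.integral_sub (hint w t) (hint w' t)]
  refine norm_inv_coshWeight_smul_integral_le ha (by positivity)
    (fun s => (norm_apply_weightedCurve_sub_le hL _ t₀ x₀ w w' s).trans ?_) t
  have hpos := coshWeight_pos (picardRate v L x₀) t₀ s
  have hrest : 0 ≤ dist w w' * coshWeight (picardRate v L x₀) t₀ s * ‖v s x₀‖ := by positivity
  simp only [NNReal.coe_div, NNReal.coe_one, NNReal.coe_ofNat]
  rw [picardRate]
  linear_combination hrest / 2

theorem exists_isIntegralCurve_of_lipschitzWith [CompleteSpace E] (hv : Continuous (uncurry v))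
    (hL : ∀ t, LipschitzWith L (v t)) (t₀ : ℝ) (x₀ : E) :
    ∃ γ : ℝ → E, γ t₀ = x₀ ∧ IsIntegralCurve γ v := by
  obtain ⟨w, hw⟩ : ∃ w, weightedPicard hv hL t₀ x₀ w = w :=
    ⟨_, (contractingWith_weightedPicard hv hL t₀ x₀).fixedPoint_isFixedPt⟩
  set γ := weightedCurve (picardRate v L x₀) t₀ x₀ w with hγ_def
  have hγ_eq : γ = fun t => x₀ + ∫ s in t₀..t, v s (γ s) := by
    funext t
    rw [hγ_def, weightedCurve, ← hw, weightedPicard_apply,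
      smul_inv_smul₀ (coshWeight_pos _ _ _).ne', hw]
  have hγ : Continuous γ := continuous_weightedCurve (continuous_picardRate hv L x₀) t₀ x₀ w
  have hvγ : Continuous fun s => v s (γ s) := hv.comp (continuous_id.prodMk hγ)
  refine ⟨γ, by rw [hγ_eq]; simp, fun t => ?_⟩
  have hderiv := (hvγ.integral_hasStrictDerivAt t₀ t).hasDerivAt.const_add x₀
  rwa [← hγ_eq] at hderiv

end GlobalExistence

section Gronwall

theorem gronwallBound_zero_left (K ε x : ℝ) :
    gronwallBound 0 K ε x = ε * gronwallBound 0 K 1 x := by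
  rcases eq_or_ne K 0 with rfl | hK
  · simp only [gronwallBound_K0, zero_add, one_mul]
  · simp only [gronwallBound_of_K_ne_0 hK]
    ring

variable {E : Type*} [NormedAddCommGroup E] [NormedSpace ℝ E]

theorem norm_le_gronwallBound_of_norm_deriv_le_uIcc {f f' : ℝ → E} {δ K ε a b : ℝ}
    (hf : ∀ t, HasDerivAt f (f' t) t) (ha : ‖f a‖ ≤ δ)
    (hbound : ∀ t ∈ uIcc a b, ‖f' t‖ ≤ K * ‖f t‖ + ε) :
    ‖f b‖ ≤ gronwallBound δ K ε |b - a| := by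
  rcases le_total a b with hab | hba
  · rw [uIcc_of_le hab] at hbound
    rw [abs_of_nonneg (sub_nonneg.2 hab)]
    exact norm_le_gronwallBound_of_norm_deriv_right_le
      (fun t _ => (hf t).continuousAt.continuousWithinAt)
      (fun t _ => (hf t).hasDerivWithinAt) ha (fun t ht => hbound t (Ico_subset_Icc_self ht)) b
      (right_mem_Icc.2 hab)
  · rw [uIcc_of_ge hba] at hbound
    have hreflect (t : ℝ) : HasDerivAt (fun s => f (-s)) (-f' (-t)) t := by
      simpa [comp_def] using (hf (-t)).scomp t (hasDerivAt_neg t)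
    have hgronwall := norm_le_gronwallBound_of_norm_deriv_right_le (f := fun s => f (-s))
      (f' := fun s => -f' (-s)) (a := -a) (b := -b) (δ := δ) (K := K) (ε := ε)
      (fun t _ => (hreflect t).continuousAt.continuousWithinAt)
      (fun t _ => (hreflect t).hasDerivWithinAt) (by simpa using ha)
      (fun t ht => by
        simpa using hbound (-t) ⟨le_neg_of_le_neg ht.2.le, neg_le_of_neg_le ht.1⟩)
      (-b) (right_mem_Icc.2 (neg_le_neg hba))
    rw [abs_of_nonpos (sub_nonpos.2 hba), neg_sub]
    simpa [neg_add_eq_sub] using hgronwall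

theorem norm_sub_le_mul_exp_of_isIntegralCurve {v : ℝ → E → E} {L : ℝ≥0} {γ γ' : ℝ → E}
    (hL : ∀ t, LipschitzWith L (v t)) (hγ : IsIntegralCurve γ v) (hγ' : IsIntegralCurve γ' v)
    (s t : ℝ) : ‖γ t - γ' t‖ ≤ ‖γ s - γ' s‖ * Real.exp (L * |t - s|) := by
  rw [← gronwallBound_ε0]
  refine norm_le_gronwallBound_of_norm_deriv_le_uIcc (f := fun r => γ r - γ' r)
    (fun r => (hγ r).sub (hγ' r)) le_rfl fun r _ => ?_
  simpa using (hL r).norm_sub_le (γ r) (γ' r)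

end Gronwall

theorem eventually_forall_norm_sub_sub_fderiv_le_of_isCompact {S E F : Type*} [TopologicalSpace S]
    [NormedAddCommGroup E] [NormedSpace ℝ E] [NormedAddCommGroup F] [NormedSpace ℝ F]
    {v : S → E → F} {v' : S → E → E →L[ℝ] F} (hv : ∀ s x, HasFDerivAt (v s) (v' s x) x)
    (hv' : Continuous (uncurry v')) {γ : S → E} (hγ : Continuous γ) {K : Set S} (hK : IsCompact K)
    {ε : ℝ} (hε : 0 < ε) :
    ∀ᶠ h in 𝓝 (0 : E), ∀ s ∈ K,
      ‖v s (γ s + h) - v s (γ s) - v' s (γ s) h‖ ≤ ε * ‖h‖ := by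
  have hcont : Continuous fun z : E × S => ‖v' z.2 (γ z.2 + z.1) - v' z.2 (γ z.2)‖ := by
    fun_prop
  have hclose : ∀ᶠ h in 𝓝 (0 : E), ∀ s ∈ K, ‖v' s (γ s + h) - v' s (γ s)‖ < ε :=
    hK.eventually_forall_of_forall_eventually fun s _ =>
      hcont.continuousAt.eventually_lt continuousAt_const (by simpa using hε)
  obtain ⟨r, hr, hball⟩ := Metric.eventually_nhds_iff_ball.1 hclose
  filter_upwards [Metric.ball_mem_nhds 0 hr] with h hh s hs
  have hmvt := (convex_ball (0 : E) r).norm_image_sub_le_of_norm_hasFDerivWithin_le'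
    (f := fun h => v s (γ s + h)) (φ := v' s (γ s))
    (fun k _ => ((hasFDerivAt_comp_add_left (γ s)).2 (hv s (γ s + k))).hasFDerivWithinAt)
    (fun k hk => (hball k hk s hs).le) (Metric.mem_ball_self hr) hh
  simpa using hmvt

section Determinant

variable {𝕜 : Type*} [NontriviallyNormedField 𝕜]

theorem hasDerivAt_matrix_det {n : Type*} [Fintype n] [DecidableEq n] {M : 𝕜 → Matrix n n 𝕜}
    {M' : Matrix n n 𝕜} {t : 𝕜} (hM : ∀ i j, HasDerivAt (fun s => M s i j) (M' i j) t) :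
    HasDerivAt (fun s => (M s).det) (∑ i, ((M t).updateRow i (M' i)).det) t := by
  let det : (n → 𝕜) [⋀^n]→L[𝕜] 𝕜 :=
    { (Matrix.detRowAlternating : (n → 𝕜) [⋀^n]→ₗ[𝕜] 𝕜) with
      cont := Continuous.matrix_det continuous_id }
  have hrows : HasDerivAt (fun s => (M s : n → n → 𝕜)) M' t :=
    hasDerivAt_pi.2 fun i => hasDerivAt_pi.2 (hM i)
  have hdet := (det.hasFDerivAt (M t)).comp_hasDerivAt t hrows
  exact hdet.congr_deriv (ContinuousMultilinearMap.linearDeriv_apply _ _ _)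

theorem hasDerivAt_matrix_det_of_hasDerivAt_mul {n : Type*} [Fintype n] [DecidableEq n]
    {M : 𝕜 → Matrix n n 𝕜} {A : Matrix n n 𝕜} {t : 𝕜}
    (hM : ∀ i j, HasDerivAt (fun s => M s i j) ((A * M t) i j) t) :
    HasDerivAt (fun s => (M s).det) (A.trace * (M t).det) t := by
  convert hasDerivAt_matrix_det hM using 1
  rw [Matrix.trace, Finset.sum_mul]
  refine Finset.sum_congr rfl fun i _ => ?_
  rw [Matrix.diag_apply, ← smul_eq_mul, ← Matrix.det_updateRow_sum, Matrix.mul_apply_eq_vecMul,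
    Matrix.vecMul_eq_sum]

theorem hasDerivAt_det_of_hasDerivAt_comp [CompleteSpace 𝕜] {E : Type*} [NormedAddCommGroup E]
    [NormedSpace 𝕜 E] [FiniteDimensional 𝕜 E] {W : 𝕜 → E →L[𝕜] E} {A : E →L[𝕜] E} {t : 𝕜}
    (hW : HasDerivAt W (A ∘L W t) t) :
    HasDerivAt (fun s => (W s).det) (LinearMap.trace 𝕜 E A * (W t).det) t := by
  let e := Module.finBasis 𝕜 E
  have hentry (i j) : HasDerivAt (fun s => LinearMap.toMatrix e e (W s) i j)
      ((LinearMap.toMatrix e e A * LinearMap.toMatrix e e (W t)) i j) t := by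
    rw [← LinearMap.toMatrix_comp]
    simp only [LinearMap.toMatrix_apply]
    exact (LinearMap.toContinuousLinearMap (e.coord i)).hasFDerivAt.comp_hasDerivAt t
      (hW.clm_apply (hasDerivAt_const t (e j)) |>.congr_deriv (by simp))
  have hdet := hasDerivAt_matrix_det_of_hasDerivAt_mul hentry
  simpa only [LinearMap.det_toMatrix, ← LinearMap.trace_eq_matrix_trace] using hdet

end Determinant

theorem eq_mul_exp_integral_of_hasDerivAt {f a : ℝ → ℝ} (ha : Continuous a)
    (hf : ∀ t, HasDerivAt f (a t * f t) t) (t₀ t : ℝ) :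
    f t = f t₀ * Real.exp (∫ s in t₀..t, a s) := by
  have hderiv (s : ℝ) : HasDerivAt (fun s => f s * Real.exp (-∫ r in t₀..s, a r)) 0 s :=
    ((hf s).fun_mul (ha.integral_hasStrictDerivAt t₀ s).hasDerivAt.fun_neg.exp).congr_deriv
      (by ring)
  have hconst := is_const_of_deriv_eq_zero (fun s => (hderiv s).differentiableAt)
    (fun s => (hderiv s).deriv) t t₀
  rw [intervalIntegral.integral_same, neg_zero, Real.exp_zero, mul_one] at hconst
  rw [← hconst, mul_assoc, ← Real.exp_add, neg_add_cancel, Real.exp_zero, mul_one]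

/-- `X` is a global flow of the time-dependent vector field `v`, started at time `0`. The time
variable comes first, as in `IsIntegralCurve`: `X t x` is the position at time `t` of the
trajectory issued from `x`. -/
structure IsFlow {E : Type*} [NormedAddCommGroup E] [NormedSpace ℝ E] (v X : ℝ → E → E) :
    Prop where
  isIntegralCurve : ∀ x, IsIntegralCurve (fun t => X t x) v
  apply_zero : ∀ x, X 0 x = x

namespace IsFlow

variable {E : Type*} [NormedAddCommGroup E] [NormedSpace ℝ E] {v X : ℝ → E → E} {L : ℝ≥0}
  {v' : ℝ → E → E →L[ℝ] E}

theorem continuous_curve (hX : IsFlow v X) (x : E) : Continuous fun t => X t x :=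
  continuous_iff_continuousAt.2 fun t => (hX.isIntegralCurve x t).continuousAt

protected theorem norm_sub_le (hX : IsFlow v X) (hL : ∀ t, LipschitzWith L (v t)) (t : ℝ)
    (x y : E) : ‖X t x - X t y‖ ≤ ‖x - y‖ * Real.exp (L * |t|) := by
  simpa [hX.apply_zero] using norm_sub_le_mul_exp_of_isIntegralCurve hL
    (hX.isIntegralCurve x) (hX.isIntegralCurve y) 0 t

theorem surjective [CompleteSpace E] (hX : IsFlow v X) (hcont : Continuous (uncurry v))
    (hL : ∀ t, LipschitzWith L (v t)) (t : ℝ) : Surjective (X t) := by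
  intro y
  obtain ⟨γ, hγt, hγ⟩ := exists_isIntegralCurve_of_lipschitzWith hcont hL t y
  have heq := norm_sub_le_mul_exp_of_isIntegralCurve hL (hX.isIntegralCurve (γ 0)) hγ 0 t
  rw [hX.apply_zero, sub_self, norm_zero, zero_mul, norm_le_zero_iff, sub_eq_zero] at heq
  exact ⟨γ 0, heq.trans hγt⟩

theorem norm_sub_sub_linearization_le (hX : IsFlow v X) (hL : ∀ t, LipschitzWith L (v t))
    (hv : ∀ t x, HasFDerivAt (v t) (v' t x) x) {x y : E} {W : ℝ → E →L[ℝ] E}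
    (hW₀ : W 0 = .id ℝ E) (hW : IsIntegralCurve W fun t U => v' t (X t x) ∘L U) {t ε : ℝ}
    (hε : 0 ≤ ε) (htaylor : ∀ s ∈ uIcc 0 t,
      ‖v s (X s y) - v s (X s x) - v' s (X s x) (X s y - X s x)‖ ≤ ε * ‖X s y - X s x‖) :
    ‖X t y - X t x - W t (y - x)‖
      ≤ ε * (Real.exp (L * |t|) * gronwallBound 0 L 1 |t|) * ‖y - x‖ := by
  have hderiv (s : ℝ) : HasDerivAt (fun s => X s y - X s x - W s (y - x))
      (v s (X s y) - v s (X s x) - v' s (X s x) (W s (y - x))) s :=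
    ((hX.isIntegralCurve y s).sub (hX.isIntegralCurve x s)).sub
      ((hW s).clm_apply (hasDerivAt_const s (y - x)) |>.congr_deriv (by simp))
  have hbound (s : ℝ) (hs : s ∈ uIcc 0 t) :
      ‖v s (X s y) - v s (X s x) - v' s (X s x) (W s (y - x))‖
        ≤ L * ‖X s y - X s x - W s (y - x)‖ + ε * (‖y - x‖ * Real.exp (L * |t|)) := by
    have hst : |s| ≤ |t| := by simpa using abs_sub_left_of_mem_uIcc hs
    have hop : ‖v' s (X s x)‖ ≤ L := (hv s _).le_of_lipschitz (hL s)
    calc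
      _ = ‖v' s (X s x) (X s y - X s x - W s (y - x))
            + (v s (X s y) - v s (X s x) - v' s (X s x) (X s y - X s x))‖ := by
        rw [map_sub _ (X s y - X s x)]
        abel_nf
      _ ≤ L * ‖X s y - X s x - W s (y - x)‖ + ε * ‖X s y - X s x‖ :=
        norm_add_le_of_le ((v' s (X s x)).le_of_opNorm_le hop _) (htaylor s hs)
      _ ≤ _ := by
        gcongr
        exact (hX.norm_sub_le hL s y x).trans (by gcongr)
  have hgronwall := norm_le_gronwallBound_of_norm_deriv_le_uIcc hderiv (δ := 0)
    (by simp [hX.apply_zero, hW₀]) hbound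
  rw [gronwallBound_zero_left, sub_zero] at hgronwall
  linear_combination hgronwall

theorem hasFDerivAt (hX : IsFlow v X) (hL : ∀ t, LipschitzWith L (v t))
    (hv : ∀ t x, HasFDerivAt (v t) (v' t x) x) (hv' : Continuous (uncurry v')) {x : E}
    {W : ℝ → E →L[ℝ] E} (hW₀ : W 0 = .id ℝ E)
    (hW : IsIntegralCurve W fun t U => v' t (X t x) ∘L U) (t : ℝ) :
    HasFDerivAt (X t) (W t) x := by
  set c := Real.exp (L * |t|) * gronwallBound 0 L 1 |t|
  have hc : 0 ≤ c := by
    have := gronwallBound_mono le_rfl zero_le_one L.coe_nonneg (abs_nonneg t)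
    rw [gronwallBound_x0] at this
    positivity
  rw [hasFDerivAt_iff_isLittleO, Asymptotics.isLittleO_iff]
  intro ε hε
  obtain ⟨r, hr, htaylor⟩ := Metric.eventually_nhds_iff_ball.1
    (eventually_forall_norm_sub_sub_fderiv_le_of_isCompact hv hv' (hX.continuous_curve x)
      (isCompact_uIcc (a := 0) (b := t)) (ε := ε / (c + 1)) (by positivity))
  have hclose : ∀ᶠ y in 𝓝 x, ‖y - x‖ * Real.exp (L * |t|) < r :=
    ContinuousAt.eventually_lt (by fun_prop) continuousAt_const (by simpa using hr)
  filter_upwards [hclose] with y hy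
  have hball (s : ℝ) (hs : s ∈ uIcc 0 t) : X s y - X s x ∈ Metric.ball (0 : E) r := by
    have hst : |s| ≤ |t| := by simpa using abs_sub_left_of_mem_uIcc hs
    rw [mem_ball_zero_iff]
    exact (hX.norm_sub_le hL s y x).trans_lt (lt_of_le_of_lt (by gcongr) hy)
  calc
    ‖X t y - X t x - W t (y - x)‖ ≤ ε / (c + 1) * c * ‖y - x‖ :=
      hX.norm_sub_sub_linearization_le hL hv hW₀ hW (by positivity) fun s hs => by
        simpa using htaylor _ (hball s hs) s hs
    _ ≤ ε * ‖y - x‖ := by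
      gcongr
      rw [div_mul_eq_mul_div, div_le_iff₀ (by positivity)]
      linear_combination hε

theorem exists_variational_solution [CompleteSpace E] (hX : IsFlow v X)
    (hL : ∀ t, LipschitzWith L (v t)) (hv : ∀ t x, HasFDerivAt (v t) (v' t x) x)
    (hv' : Continuous (uncurry v')) (x : E) :
    ∃ W : ℝ → E →L[ℝ] E, W 0 = .id ℝ E ∧ IsIntegralCurve W fun t U => v' t (X t x) ∘L U := by
  have hcurve := hX.continuous_curve x
  refine exists_isIntegralCurve_of_lipschitzWith (L := L) (by fun_prop)
    (fun t => LipschitzWith.of_dist_le_mul fun U V => ?_) 0 _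
  rw [dist_eq_norm, dist_eq_norm, ← ContinuousLinearMap.comp_sub]
  exact (ContinuousLinearMap.opNorm_comp_le _ _).trans
    (mul_le_mul_of_nonneg_right ((hv t _).le_of_lipschitz (hL t)) (norm_nonneg _))

theorem differentiableAt [CompleteSpace E] (hX : IsFlow v X) (hL : ∀ t, LipschitzWith L (v t))
    (hv : ∀ t x, HasFDerivAt (v t) (v' t x) x) (hv' : Continuous (uncurry v')) (t : ℝ) (x : E) :
    DifferentiableAt ℝ (X t) x :=
  have ⟨_, hW₀, hW⟩ := hX.exists_variational_solution hL hv hv' x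
  (hX.hasFDerivAt hL hv hv' hW₀ hW t).differentiableAt

theorem fderiv_zero (hX : IsFlow v X) (x : E) : fderiv ℝ (X 0) x = .id ℝ E := by
  rw [show X 0 = id from funext hX.apply_zero, fderiv_id]

theorem isIntegralCurve_fderiv [CompleteSpace E] (hX : IsFlow v X)
    (hL : ∀ t, LipschitzWith L (v t)) (hv : ∀ t x, HasFDerivAt (v t) (v' t x) x)
    (hv' : Continuous (uncurry v')) (x : E) :
    IsIntegralCurve (fun t => fderiv ℝ (X t) x) fun t U => v' t (X t x) ∘L U := by
  obtain ⟨W, hW₀, hW⟩ := hX.exists_variational_solution hL hv hv' x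
  rwa [funext fun t => (hX.hasFDerivAt hL hv hv' hW₀ hW t).fderiv]

variable [FiniteDimensional ℝ E]

theorem hasDerivAt_det_fderiv (hX : IsFlow v X) (hL : ∀ t, LipschitzWith L (v t))
    (hv : ∀ t x, HasFDerivAt (v t) (v' t x) x) (hv' : Continuous (uncurry v')) (t : ℝ) (x : E) :
    HasDerivAt (fun s => (fderiv ℝ (X s) x).det)
      (LinearMap.trace ℝ E (v' t (X t x)) * (fderiv ℝ (X t) x).det) t :=
  have := FiniteDimensional.complete ℝ E
  hasDerivAt_det_of_hasDerivAt_comp (hX.isIntegralCurve_fderiv hL hv hv' x t)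

theorem det_fderiv_eq_exp (hX : IsFlow v X) (hL : ∀ t, LipschitzWith L (v t))
    (hv : ∀ t x, HasFDerivAt (v t) (v' t x) x) (hv' : Continuous (uncurry v')) (t : ℝ) (x : E) :
    (fderiv ℝ (X t) x).det = Real.exp (∫ s in 0..t, LinearMap.trace ℝ E (v' s (X s x))) := by
  have hcurve := hX.continuous_curve x
  have htrace : Continuous fun A : E →L[ℝ] E => LinearMap.trace ℝ E A :=
    (LinearMap.trace ℝ E ∘ₗ ContinuousLinearMap.coeLM ℝ).continuous_of_finiteDimensional
  have hliouville := eq_mul_exp_integral_of_hasDerivAt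
    (htrace.comp (g := fun A : E →L[ℝ] E => LinearMap.trace ℝ E A)
      (f := fun s => v' s (X s x)) (by fun_prop))
    (fun s => hX.hasDerivAt_det_fderiv hL hv hv' s x) 0 t
  rw [hliouville, hX.fderiv_zero]
  simp [ContinuousLinearMap.det]

theorem fderiv_add_trace_mul_eq_zero (hX : IsFlow v X) (hL : ∀ t, LipschitzWith L (v t))
    (hv : ∀ t x, HasFDerivAt (v t) (v' t x) x) (hv' : Continuous (uncurry v')) {ρ : ℝ × E → ℝ}
    {t : ℝ} {x : E} (hρ : ∀ s, ρ (s, X s x) = (fderiv ℝ (X s) x).det⁻¹)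
    (hρ' : DifferentiableAt ℝ ρ (t, X t x)) :
    fderiv ℝ ρ (t, X t x) (1, v t (X t x)) + LinearMap.trace ℝ E (v' t (X t x)) * ρ (t, X t x)
      = 0 := by
  have hne : (fderiv ℝ (X t) x).det ≠ 0 := by
    rw [hX.det_fderiv_eq_exp hL hv hv']
    exact Real.exp_ne_zero _
  have hchain : HasDerivAt (fun s => ρ (s, X s x)) (fderiv ℝ ρ (t, X t x) (1, v t (X t x))) t :=
    hρ'.hasFDerivAt.comp_hasDerivAt t ((hasDerivAt_id t).prodMk (hX.isIntegralCurve x t))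
  have hinv := (hX.hasDerivAt_det_fderiv hL hv hv' t x).fun_inv hne
  rw [← funext hρ] at hinv
  rw [hchain.unique hinv, hρ]
  field_simp
  ring

end IsFlow

section Coordinates

variable {ι : Type*} [Fintype ι] [DecidableEq ι]

/-- The Jacobian determinant of `f` at `x`, computed from the matrix of partial derivatives of the
components of `f`. Rows of components that are not differentiable at `x` have the junk value `0`, so
this may differ from `(fderiv ℝ f x).det` unless `f` is differentiable at `x`. -/
noncomputable def jacobianDet (f : (ι → ℝ) → ι → ℝ) (x : ι → ℝ) : ℝ :=
  Matrix.det (Matrix.of fun i j => fderiv ℝ (fun y => f y i) x (Pi.single j 1))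

theorem jacobianDet_eq_det_fderiv {f : (ι → ℝ) → ι → ℝ} {x : ι → ℝ}
    (hf : DifferentiableAt ℝ f x) : jacobianDet f x = (fderiv ℝ f x).det := by
  rw [ContinuousLinearMap.det, ← LinearMap.det_toMatrix', jacobianDet]
  congr 1
  ext i j
  rw [Matrix.of_apply, LinearMap.toMatrix'_apply, fderiv_apply hf]
  rfl

theorem sum_fderiv_mul_single_eq {F : Type*} [NormedAddCommGroup F] [NormedSpace ℝ F]
    {b : F × (ι → ℝ) → ι → ℝ} {ρ : F × (ι → ℝ) → ℝ} {p : F × (ι → ℝ)}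
    (hb : DifferentiableAt ℝ b p) (hρ : DifferentiableAt ℝ ρ p) :
    ∑ i, fderiv ℝ (fun q => b q i * ρ q) p (0, Pi.single i 1)
      = fderiv ℝ ρ p (0, b p)
        + LinearMap.trace ℝ (ι → ℝ) (fderiv ℝ b p ∘L .inr ℝ F (ι → ℝ)) * ρ p := by
  have hterm (i : ι) : fderiv ℝ (fun q => b q i * ρ q) p (0, Pi.single i 1)
      = b p i * fderiv ℝ ρ p (0, Pi.single i 1) + fderiv ℝ b p (0, Pi.single i 1) i * ρ p := by
    rw [fderiv_fun_mul (differentiableAt_pi.1 hb i) hρ, fderiv_apply hb]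
    simp [mul_comm]
  have hdir : fderiv ℝ ρ p (0, b p) = ∑ i, b p i * fderiv ℝ ρ p (0, Pi.single i 1) := by
    simpa using congrArg (fderiv ℝ ρ p ∘L .inr ℝ F (ι → ℝ))
      ((Pi.basisFun ℝ ι).sum_repr (b p)).symm
  have htrace : LinearMap.trace ℝ (ι → ℝ) (fderiv ℝ b p ∘L .inr ℝ F (ι → ℝ))
      = ∑ i, fderiv ℝ b p (0, Pi.single i 1) i := by
    simp [LinearMap.trace_eq_matrix_trace ℝ (Pi.basisFun ℝ ι), Matrix.trace]
  rw [hdir, htrace, Finset.sum_mul, ← Finset.sum_add_distrib]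
  exact Finset.sum_congr rfl fun i _ => hterm i

end Coordinates

theorem stmt_15_general {ι : Type*} [Fintype ι] [DecidableEq ι] {b : ℝ × (ι → ℝ) → ι → ℝ}
    {X : ℝ × (ι → ℝ) → ι → ℝ} {ρ : ℝ × (ι → ℝ) → ℝ} (hb : ContDiff ℝ 1 b)
    (hblip : ∃ L : ℝ≥0, ∀ t, LipschitzWith L fun x => b (t, x))
    (hflow : ∀ t x, HasDerivAt (fun s => X (s, x)) (b (t, X (t, x))) t)
    (hflow0 : ∀ x, X (0, x) = x) (hρ : Differentiable ℝ ρ)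
    (hρdef : ∀ t x, ρ (t, X (t, x)) = (jacobianDet (fun y => X (t, y)) x)⁻¹) :
    (∀ C, (∀ t x, 1 / C ≤ jacobianDet (fun y => X (t, y)) x
        ∧ jacobianDet (fun y => X (t, y)) x ≤ C) → ∀ p, 1 / C ≤ ρ p ∧ ρ p ≤ C)
    ∧ ∀ p, fderiv ℝ ρ p (1, 0)
        + ∑ i, fderiv ℝ (fun q => b q i * ρ q) p (0, Pi.single i 1) = 0 := by
  obtain ⟨L, hL⟩ := hblip
  have hX : IsFlow (fun t y => b (t, y)) fun t y => X (t, y) := ⟨fun x t => hflow t x, hflow0⟩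
  have hv (t : ℝ) (x : ι → ℝ) : HasFDerivAt (fun y => b (t, y))
      (fderiv ℝ b (t, x) ∘L .inr ℝ ℝ (ι → ℝ)) x :=
    (hb.differentiable one_ne_zero (t, x)).hasFDerivAt.comp x (hasFDerivAt_prodMk_right t x)
  have hv' : Continuous (uncurry fun t x => fderiv ℝ b (t, x) ∘L .inr ℝ ℝ (ι → ℝ)) :=
    (hb.continuous_fderiv one_ne_zero).clm_comp continuous_const
  have hdet (t : ℝ) (x : ι → ℝ) :
      jacobianDet (fun y => X (t, y)) x = (fderiv ℝ (fun y => X (t, y)) x).det :=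
    jacobianDet_eq_det_fderiv (hX.differentiableAt hL hv hv' t x)
  have hsurj := hX.surjective hb.continuous hL
  refine ⟨fun C hC ⟨t, y⟩ => ?_, fun ⟨t, y⟩ => ?_⟩ <;> obtain ⟨x, rfl⟩ := hsurj t y
  · have hpos : 0 < jacobianDet (fun y => X (t, y)) x := by
      rw [hdet, hX.det_fderiv_eq_exp hL hv hv']
      exact Real.exp_pos _
    obtain ⟨hlower, hupper⟩ := hC t x
    rw [one_div] at hlower ⊢
    rw [hρdef]
    exact ⟨inv_anti₀ hpos hupper, inv_le_of_inv_le₀ (hpos.trans_le hupper) hlower⟩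
  · rw [sum_fderiv_mul_single_eq (hb.differentiable one_ne_zero _) (hρ _), ← add_assoc, ← map_add,
      Prod.mk_add_mk, add_zero, zero_add]
    exact hX.fderiv_add_trace_mul_eq_zero hL hv hv'
      (fun s => (hρdef s x).trans (congrArg _ (hdet s x))) (hρ _)

/-- If the Jacobian of the flow of b is bounded away from 0 and ∞, then ρ defined by
ρ(t, X(t,x)) = 1/det(∇ₓX(t,x)) satisfies 1/C ≤ ρ ≤ C and solves the continuity
equation: b is nearly incompressible. -/
theorem stmt_15 (d : ℕ) (b : ℝ × (Fin d → ℝ) → Fin d → ℝ)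
    (X : ℝ × (Fin d → ℝ) → Fin d → ℝ) (ρ : ℝ × (Fin d → ℝ) → ℝ) (C : ℝ)
    (hC : 0 < C)
    (hb : ContDiff ℝ (⊤ : ℕ∞) b)
    (hblip : ∃ L : NNReal, ∀ t : ℝ, LipschitzWith L (fun x => b (t, x)))
    (hflow : ∀ (t : ℝ) (x : Fin d → ℝ),
      HasDerivAt (fun s => X (s, x)) (b (t, X (t, x))) t)
    (hflow0 : ∀ x : Fin d → ℝ, X (0, x) = x)
    (hρ : ContDiff ℝ (⊤ : ℕ∞) ρ)
    (hJbound : ∀ (t : ℝ) (x : Fin d → ℝ),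
      1 / C ≤ Matrix.det (Matrix.of fun i j =>
          fderiv ℝ (fun y => X (t, y) i) x (Pi.single j 1))
        ∧ Matrix.det (Matrix.of fun i j =>
            fderiv ℝ (fun y => X (t, y) i) x (Pi.single j 1)) ≤ C)
    (hρdef : ∀ (t : ℝ) (x : Fin d → ℝ),
      ρ (t, X (t, x)) = (Matrix.det (Matrix.of fun i j =>
        fderiv ℝ (fun y => X (t, y) i) x (Pi.single j 1)))⁻¹) :
    (∀ p : ℝ × (Fin d → ℝ), 1 / C ≤ ρ p ∧ ρ p ≤ C)
    ∧ (∀ p : ℝ × (Fin d → ℝ),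
        fderiv ℝ ρ p (1, 0)
          + ∑ i, fderiv ℝ (fun q => b q i * ρ q) p (0, Pi.single i 1) = 0) := by
  obtain ⟨hbound, hcontinuity⟩ := stmt_15_general (hb.of_le (by exact_mod_cast le_top)) hblip
    hflow hflow0 (hρ.differentiable (by simp)) hρdef
  exact ⟨hbound C hJbound, hcontinuity⟩
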